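/- Let N be a 2-2-XOR-BN on n nodes, let U be a control node set for N, and let t* be the minimum positive integer such that for every initial state x^0 and every target state x^T there exist control signals driving N from x(0)=x^0 to x(t*)=x^T in exactly t* steps. Then n/t* ≤ |U| ≤ n − t* + 1. -/

import Mathlib

namespace BN

variable {n : ℕ}

/-- The Boolean function `f` depends on input `j`. -/
def Depends (f : (Fin n → Bool) → Bool) (j : Fin n) : Prop :=
  ∃ x : Fin n → Bool, f (Function.update x j (!(x j))) ≠ f x

/-- The set of incoming nodes of node `i` (Γ⁻). -/
def inSet (F : Fin n → (Fin n → Bool) → Bool) (i : Fin n) : Set (Fin n) :=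
  {j | Depends (F i) j}

/-- The set of outgoing nodes of node `i` (Γ⁺). -/
def outSet (F : Fin n → (Fin n → Bool) → Bool) (i : Fin n) : Set (Fin n) :=
  {j | Depends (F j) i}

/-- The controlled trajectory: nodes in `U` get an xor-control signal. -/
def traj (F : Fin n → (Fin n → Bool) → Bool) (U : Finset (Fin n))
    (u : ℕ → Fin n → Bool) (x0 : Fin n → Bool) : ℕ → Fin n → Bool
  | 0 => x0
  | t + 1 => fun i =>
      if i ∈ U then Bool.xor (u t i) (F i (traj F U u x0 t))
      else F i (traj F U u x0 t)

/-- `U` is a control node set: any initial state can be driven to any target state. -/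
def IsControlSet (F : Fin n → (Fin n → Bool) → Bool) (U : Finset (Fin n)) : Prop :=
  ∀ x0 xT : Fin n → Bool, ∃ t : ℕ, 1 ≤ t ∧ ∃ u : ℕ → Fin n → Bool, traj F U u x0 t = xT

/-- XOR (parity) of the inputs in `S`. -/
def xorFun (S : Finset (Fin n)) (x : Fin n → Bool) : Bool :=
  decide ((S.filter (fun j => x j = true)).card % 2 = 1)

/-- `f` is the XOR of `k` distinct inputs, or its negation. -/
def IsKXor (k : ℕ) (f : (Fin n → Bool) → Bool) : Prop :=
  ∃ S : Finset (Fin n), S.card = k ∧ (f = xorFun S ∨ f = fun x => !(xorFun S x))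

/-- A `k`-`k`-XOR-BN: each function is a `k`-input XOR (or negation) and
every node has indegree `k` and outdegree `k`. -/
def IsKKXorBN (k : ℕ) (F : Fin n → (Fin n → Bool) → Bool) : Prop :=
  (∀ i, IsKXor k (F i)) ∧ ∀ i, (inSet F i).ncard = k ∧ (outSet F i).ncard = k

/-- All pairs of states are connected in exactly `t` steps under controls on `U`. -/
def ReachIn (F : Fin n → (Fin n → Bool) → Bool) (U : Finset (Fin n)) (t : ℕ) : Prop :=
  ∀ x0 xT : Fin n → Bool, ∃ u : ℕ → Fin n → Bool, traj F U u x0 t = xT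

/-- The field element `0` or `1` corresponding to a Boolean. -/
def bit (b : Bool) : ZMod 2 := if b then 1 else 0

theorem bit_injective : Function.Injective bit := by decide

theorem bit_surjective : Function.Surjective bit := by decide

theorem bit_xor (a b : Bool) : bit (a.xor b) = bit a + bit b := by
  revert a b; decide

theorem bit_not (a : Bool) : bit (!a) = bit a + 1 := by
  revert a; decide

/-- The vector over `ZMod 2` corresponding to a Boolean state. -/
def bitVec (x : Fin n → Bool) : Fin n → ZMod 2 := fun i => bit (x i)

theorem bitVec_injective : Function.Injective (bitVec (n := n)) := fun _ _ h =>
  funext fun i => bit_injective (congrFun h i)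

theorem bitVec_surjective : Function.Surjective (bitVec (n := n)) := fun y => by
  choose x hx using fun i => bit_surjective (y i)
  exact ⟨x, funext hx⟩

theorem bit_xorFun (S : Finset (Fin n)) (x : Fin n → Bool) :
    bit (xorFun S x) = ∑ j ∈ S, bit (x j) := by
  simp only [bit, Finset.sum_boole, xorFun, decide_eq_true_eq]
  split_ifs with h
  · exact ((ZMod.natCast_eq_one_iff_odd).2 (Nat.odd_iff.2 h)).symm
  · exact ((ZMod.natCast_eq_zero_iff_even).2 (Nat.not_odd_iff_even.1 (mt Nat.odd_iff.1 h))).symm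

/-- A network of XOR functions acts on differences of states as a linear map. -/
theorem exists_linearMap_of_isKXor {k : ℕ} {F : Fin n → (Fin n → Bool) → Bool}
    (hF : ∀ i, IsKXor k (F i)) :
    ∃ A : (Fin n → ZMod 2) →ₗ[ZMod 2] (Fin n → ZMod 2), ∀ x y,
      bitVec (fun i => F i x) - bitVec (fun i => F i y) = A (bitVec x - bitVec y) := by
  choose S _ hS using hF
  refine ⟨LinearMap.pi fun i => ∑ j ∈ S i, LinearMap.proj j, fun x y => funext fun i => ?_⟩
  rcases hS i with h | h <;>
    simp [bitVec, h, bit_not, bit_xorFun, LinearMap.sum_apply, Finset.sum_sub_distrib]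

/-- The vectors supported on the control nodes. -/
noncomputable def controlSpace (U : Finset (Fin n)) : Submodule (ZMod 2) (Fin n → ZMod 2) :=
  LinearMap.range (Function.ExtendByZero.linearMap (ZMod 2) (Subtype.val : U → Fin n))

theorem mem_controlSpace {U : Finset (Fin n)} {y : Fin n → ZMod 2} :
    y ∈ controlSpace U ↔ ∀ i ∉ U, y i = 0 := by
  constructor
  · rintro ⟨v, rfl⟩ i hi
    exact Function.extend_apply' _ _ _ (by rintro ⟨a, rfl⟩; exact hi a.2)
  · intro h
    refine ⟨fun i => y i, funext fun i => ?_⟩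
    by_cases hi : i ∈ U
    · exact Subtype.val_injective.extend_apply (fun j : U => y j) 0 ⟨i, hi⟩
    · rw [h i hi]
      exact Function.extend_apply' (f := (Subtype.val : U → Fin n)) (fun j => y j) 0 i
        (by rintro ⟨a, rfl⟩; exact hi a.2)

theorem finrank_controlSpace (U : Finset (Fin n)) :
    Module.finrank (ZMod 2) (controlSpace U) = U.card := by
  rw [controlSpace, LinearMap.finrank_range_of_inj, Module.finrank_fintype_fun_eq_card,
    Fintype.card_coe]
  intro v w h
  funext i
  have hi : Function.extend Subtype.val v 0 i.1 = Function.extend Subtype.val w 0 i.1 :=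
    congrFun h i
  rwa [Subtype.val_injective.extend_apply, Subtype.val_injective.extend_apply] at hi

/-- The iterated controllability subspaces `P + A P + ⋯ + A ^ (t - 1) P`. -/
def reachSpace {K V : Type*} [Field K] [AddCommGroup V] [Module K V]
    (A : V →ₗ[K] V) (P : Submodule K V) : ℕ → Submodule K V
  | 0 => ⊥
  | t + 1 => (reachSpace A P t).map A ⊔ P

section ReachSpace

variable {K V : Type*} [Field K] [AddCommGroup V] [Module K V]
  (A : V →ₗ[K] V) (P : Submodule K V)

theorem reachSpace_le_succ (t : ℕ) : reachSpace A P t ≤ reachSpace A P (t + 1) := by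
  induction t with
  | zero => exact bot_le
  | succ t ih => exact sup_le_sup_right (Submodule.map_mono ih) P

theorem reachSpace_eq_of_eq_succ {t : ℕ} (h : reachSpace A P t = reachSpace A P (t + 1)) (m : ℕ) :
    reachSpace A P (t + m) = reachSpace A P t := by
  induction m with
  | zero => rfl
  | succ m ih =>
    rw [← add_assoc, reachSpace, ih]
    exact h.symm

theorem finrank_reachSpace_le [FiniteDimensional K V] (t : ℕ) :
    Module.finrank K (reachSpace A P t) ≤ t * Module.finrank K P := by
  induction t with
  | zero => rw [reachSpace, finrank_bot, zero_mul]
  | succ t ih =>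
    have h₁ := Submodule.finrank_add_le_finrank_add_finrank ((reachSpace A P t).map A) P
    have h₂ := Submodule.finrank_map_le A (reachSpace A P t)
    rw [reachSpace, add_mul, one_mul]
    omega

/-- Before the controllability subspaces fill the space, their dimensions strictly increase. -/
theorem le_finrank_reachSpace [FiniteDimensional K V] {T : ℕ} (hT : reachSpace A P T = ⊤)
    (hmin : ∀ t, 1 ≤ t → t < T → reachSpace A P t ≠ ⊤) (t : ℕ) (ht : t + 1 ≤ T) :
    Module.finrank K P + t ≤ Module.finrank K (reachSpace A P (t + 1)) := by
  induction t with
  | zero => rw [reachSpace, reachSpace, Submodule.map_bot, bot_sup_eq, add_zero]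
  | succ t ih =>
    have hlt : reachSpace A P (t + 1) < reachSpace A P (t + 1 + 1) := by
      refine lt_of_le_of_ne (reachSpace_le_succ A P _) fun h => ?_
      have hs := reachSpace_eq_of_eq_succ A P h (T - (t + 1))
      rw [Nat.add_sub_cancel' (by omega), hT] at hs
      exact hmin (t + 1) (by omega) ht hs.symm
    have := Submodule.finrank_lt_finrank_of_lt hlt
    have := ih (by omega)
    omega

end ReachSpace

theorem traj_congr (F : Fin n → (Fin n → Bool) → Bool) (U : Finset (Fin n))
    {u v : ℕ → Fin n → Bool} (x0 : Fin n → Bool) {t : ℕ} (h : ∀ s < t, u s = v s) :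
    traj F U u x0 t = traj F U v x0 t := by
  induction t with
  | zero => rfl
  | succ t ih =>
    funext i
    simp only [traj, ih fun s hs => h s (by omega), h t (by omega)]

/-- The part of a control signal that acts on the nodes in `U`. -/
def maskedSignal (U : Finset (Fin n)) (v : Fin n → Bool) : Fin n → ZMod 2 :=
  fun i => if i ∈ U then bit (v i) else 0

theorem maskedSignal_mem (U : Finset (Fin n)) (v : Fin n → Bool) :
    maskedSignal U v ∈ controlSpace U :=
  mem_controlSpace.2 fun _ hi => if_neg hi

theorem exists_maskedSignal {U : Finset (Fin n)} {p : Fin n → ZMod 2} (hp : p ∈ controlSpace U) :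
    ∃ v, maskedSignal U v = p := by
  obtain ⟨v, rfl⟩ := bitVec_surjective p
  refine ⟨v, funext fun i => ?_⟩
  by_cases hi : i ∈ U
  · simp [maskedSignal, hi, bitVec]
  · simp [maskedSignal, hi, mem_controlSpace.1 hp i hi]

theorem bitVec_traj_succ (F : Fin n → (Fin n → Bool) → Bool) (U : Finset (Fin n))
    (u : ℕ → Fin n → Bool) (x0 : Fin n → Bool) (t : ℕ) :
    bitVec (traj F U u x0 (t + 1)) =
      maskedSignal U (u t) + bitVec (fun i => F i (traj F U u x0 t)) := by
  funext i
  by_cases hi : i ∈ U <;> simp [bitVec, traj, maskedSignal, hi, bit_xor]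

/-- The states reachable in `t` steps form a coset of the controllability subspace. -/
theorem exists_traj_iff {F : Fin n → (Fin n → Bool) → Bool}
    {A : (Fin n → ZMod 2) →ₗ[ZMod 2] (Fin n → ZMod 2)}
    (hA : ∀ x y, bitVec (fun i => F i x) - bitVec (fun i => F i y) = A (bitVec x - bitVec y))
    (U : Finset (Fin n)) (x0 : Fin n → Bool) (t : ℕ) (y : Fin n → Bool) :
    (∃ u, traj F U u x0 t = y) ↔
      bitVec y - bitVec (traj F U (fun _ _ => false) x0 t) ∈
        reachSpace A (controlSpace U) t := by
  have hzero : maskedSignal U (fun _ => false) = 0 := by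
    funext i; simp [maskedSignal, bit]
  induction t generalizing y with
  | zero =>
    simp only [traj, exists_const, reachSpace, Submodule.mem_bot, sub_eq_zero]
    exact ⟨fun h => h ▸ rfl, fun h => (bitVec_injective h).symm⟩
  | succ t ih =>
    rw [bitVec_traj_succ, hzero, zero_add, reachSpace]
    constructor
    · rintro ⟨u, rfl⟩
      rw [bitVec_traj_succ, add_sub_assoc, hA, add_comm]
      exact Submodule.add_mem_sup (Submodule.mem_map_of_mem ((ih _).1 ⟨u, rfl⟩))
        (maskedSignal_mem U _)
    · intro h
      obtain ⟨_, ⟨w, hw, rfl⟩, p, hp, hwp⟩ := Submodule.mem_sup.1 h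
      obtain ⟨z, hz⟩ := bitVec_surjective (w + bitVec (traj F U (fun _ _ => false) x0 t))
      have hzw : bitVec z - bitVec (traj F U (fun _ _ => false) x0 t) = w := by simp [hz]
      obtain ⟨u, hu⟩ := (ih z).2 (hzw ▸ hw)
      obtain ⟨v, rfl⟩ := exists_maskedSignal hp
      refine ⟨Function.update u t v, bitVec_injective ?_⟩
      have hcongr : traj F U (Function.update u t v) x0 t = z :=
        (traj_congr F U x0 fun s hs => Function.update_of_ne hs.ne _ _).trans hu
      rw [bitVec_traj_succ, hcongr, Function.update_self]
      rw [← hzw, ← hA, sub_add_eq_add_sub, sub_left_inj] at hwp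
      rw [← hwp, add_comm]

theorem reachIn_iff {F : Fin n → (Fin n → Bool) → Bool}
    {A : (Fin n → ZMod 2) →ₗ[ZMod 2] (Fin n → ZMod 2)}
    (hA : ∀ x y, bitVec (fun i => F i x) - bitVec (fun i => F i y) = A (bitVec x - bitVec y))
    (U : Finset (Fin n)) (t : ℕ) :
    ReachIn F U t ↔ reachSpace A (controlSpace U) t = ⊤ := by
  simp only [ReachIn, exists_traj_iff hA]
  refine ⟨fun h => (Submodule.eq_top_iff').2 fun w => ?_, fun h x y => h ▸ Submodule.mem_top⟩
  let c := traj F U (fun _ _ => false) (fun _ => false) t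
  obtain ⟨y, hy⟩ := bitVec_surjective (w + bitVec c)
  simpa [hy, c] using h (fun _ => false) y

/-- For a 2-2-XOR-BN with control node set `U`, if `t*` is the minimum
positive time in which every state can be driven to every state, then
`n / t* ≤ |U| ≤ n − t* + 1`. -/
theorem stmt5 (n : ℕ) (F : Fin n → (Fin n → Bool) → Bool) (hF : IsKKXorBN 2 F)
    (U : Finset (Fin n)) (hU : IsControlSet F U)
    (tstar : ℕ) (h1 : 1 ≤ tstar) (hreach : ReachIn F U tstar)
    (hmin : ∀ t : ℕ, 1 ≤ t → ReachIn F U t → tstar ≤ t) :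
    (n : ℚ) / tstar ≤ U.card ∧ (U.card : ℚ) ≤ (n : ℚ) - tstar + 1 := by
  obtain ⟨A, hA⟩ := exists_linearMap_of_isKXor hF.1
  have htop := (reachIn_iff hA U tstar).1 hreach
  have hlow := finrank_reachSpace_le A (controlSpace U) tstar
  have hup := le_finrank_reachSpace A (controlSpace U) htop
    (fun t ht hlt h => absurd (hmin t ht ((reachIn_iff hA U t).2 h)) (by omega))
    (tstar - 1) (by omega)
  rw [Nat.sub_add_cancel h1] at hup
  rw [htop, finrank_top, Module.finrank_fin_fun, finrank_controlSpace] at hlow hup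
  constructor
  · rw [div_le_iff₀ (by exact_mod_cast h1), mul_comm]
    exact_mod_cast hlow
  · have : U.card + tstar ≤ n + 1 := by omega
    have : (U.card : ℚ) + tstar ≤ n + 1 := by exact_mod_cast this
    linarith

end BN
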